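/- Let (A, {Δ(λ)}) be a split quasi-hereditary algebra over a commutative Noetherian ring R and M ∈ F(Δ̃). If M(𝔪) ≅ Δ(λ)(𝔪) for a fixed λ ∈ Λ and every maximal ideal 𝔪 of R, then M ≅ Δ(λ) ⊗_R F for some invertible R-module F. -/

import Mathlib

open scoped TensorProduct
open CategoryTheory

noncomputable section

section Core

variable (R : Type) [CommRing R] (A : Type) [Ring A] [Algebra R A]

/-- The action of `a : A` on an `A`-module as an `R`-linear endomorphism. -/
def actL (M : Type) [AddCommGroup M] [Module R M] [Module A M] [IsScalarTower R A M]
    (a : A) : M →ₗ[R] M where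
  toFun m := a • m
  map_add' := smul_add a
  map_smul' r m := (smul_comm r a m).symm

/-- The right `A`-module (i.e. `Aᵐᵒᵖ`-module) structure on the `R`-linear dual of a left
`A`-module `M`, given by `(aᵒᵖ • f) m = f (a • m)`. -/
instance dualModule (M : Type) [AddCommGroup M] [Module R M] [Module A M]
    [IsScalarTower R A M] : Module Aᵐᵒᵖ (M →ₗ[R] R) where
  smul a f := f.comp (actL R A M a.unop)
  one_smul f := by ext m; show f ((1 : Aᵐᵒᵖ).unop • m) = f m; simp
  mul_smul a b f := by
    ext m
    show f ((a * b).unop • m) = f (b.unop • a.unop • m)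
    simp [mul_smul]
  smul_zero a := rfl
  smul_add a f g := rfl
  add_smul a b f := by
    ext m
    show f ((a + b).unop • m) = f (a.unop • m) + f (b.unop • m)
    simp [add_smul]
  zero_smul f := by ext m; show f ((0 : Aᵐᵒᵖ).unop • m) = 0; simp

@[simp] lemma dualModule_smul_apply (M : Type) [AddCommGroup M] [Module R M] [Module A M]
    [IsScalarTower R A M] (a : Aᵐᵒᵖ) (f : M →ₗ[R] R) (m : M) :
    (a • f) m = f (a.unop • m) := rfl

instance dualTower (M : Type) [AddCommGroup M] [Module R M] [Module A M]
    [IsScalarTower R A M] : IsScalarTower R Aᵐᵒᵖ (M →ₗ[R] R) := by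
  constructor
  intro r a f
  ext m
  show f ((r • a).unop • m) = r • f (a.unop • m)
  rw [MulOpposite.unop_smul, smul_assoc, map_smul]

/-- The left `A`-module structure on the `R`-linear dual of a right `A`-module
(i.e. an `Aᵐᵒᵖ`-module) `M`, given by `(a • f) m = f (aᵒᵖ • m)`. -/
instance dualModule' (M : Type) [AddCommGroup M] [Module R M] [Module Aᵐᵒᵖ M]
    [IsScalarTower R Aᵐᵒᵖ M] : Module A (M →ₗ[R] R) where
  smul a f := f.comp (actL R Aᵐᵒᵖ M (MulOpposite.op a))
  one_smul f := by ext m; show f (MulOpposite.op (1 : A) • m) = f m; simp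
  mul_smul a b f := by
    ext m
    show f (MulOpposite.op (a * b) • m) = f (MulOpposite.op b • MulOpposite.op a • m)
    rw [MulOpposite.op_mul, mul_smul]
  smul_zero a := rfl
  smul_add a f g := rfl
  add_smul a b f := by
    ext m
    show f (MulOpposite.op (a + b) • m) = f (MulOpposite.op a • m) + f (MulOpposite.op b • m)
    rw [MulOpposite.op_add, add_smul, map_add]
  zero_smul f := by ext m; show f (MulOpposite.op (0 : A) • m) = 0; simp

@[simp] lemma dualModule'_smul_apply (M : Type) [AddCommGroup M] [Module R M] [Module Aᵐᵒᵖ M]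
    [IsScalarTower R Aᵐᵒᵖ M] (a : A) (f : M →ₗ[R] R) (m : M) :
    (a • f) m = f (MulOpposite.op a • m) := rfl

instance dualTower' (M : Type) [AddCommGroup M] [Module R M] [Module Aᵐᵒᵖ M]
    [IsScalarTower R Aᵐᵒᵖ M] : IsScalarTower R A (M →ₗ[R] R) := by
  constructor
  intro r a f
  ext m
  show f (MulOpposite.op (r • a) • m) = r • f (MulOpposite.op a • m)
  rw [MulOpposite.op_smul, smul_assoc, map_smul]

variable (Λ : Type) [Fintype Λ] [PartialOrder Λ]

/-- Data witnessing that `X` is isomorphic to `Δ(λ) ⊗_R U` for some `λ ∈ S` and some finitely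
generated projective `R`-module `U`. -/
structure TensorFactor (Δ : Λ → Type) [∀ l, AddCommGroup (Δ l)] [∀ l, Module R (Δ l)]
    [∀ l, Module A (Δ l)] [∀ l, IsScalarTower R A (Δ l)]
    (S : Set Λ) (X : Type) [AddCommGroup X] [Module A X] : Type 1 where
  lam : Λ
  mem : lam ∈ S
  U : ModuleCat.{0} R
  fin : Module.Finite R U
  proj : Module.Projective R U
  iso : X ≃ₗ[A] (TensorProduct R (Δ lam) U)

/-- `M` belongs to `F(Δ̃_S)`: it is a finitely generated `A`-module with a finite filtration
whose factors are of the form `Δ(λ) ⊗_R U`, `λ ∈ S`, `U` a finitely generated projective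
`R`-module. -/
def InFilt (Δ : Λ → Type) [∀ l, AddCommGroup (Δ l)] [∀ l, Module R (Δ l)]
    [∀ l, Module A (Δ l)] [∀ l, IsScalarTower R A (Δ l)]
    (S : Set Λ) (M : Type) [AddCommGroup M] [Module A M] : Prop :=
  Module.Finite A M ∧
  ∃ (n : ℕ) (c : Fin (n + 1) → Submodule A M), c 0 = ⊥ ∧ c (Fin.last n) = ⊤ ∧ Monotone c ∧
    ∀ i : Fin n, Nonempty (TensorFactor R A Λ Δ S
      (↥(c i.succ) ⧸ (Submodule.comap (c i.succ).subtype (c i.castSucc))))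

/-- Data witnessing that `X` is isomorphic to `F(λ)` for some `λ ∈ S`. -/
structure PlainFactor (F : Λ → Type) [∀ l, AddCommGroup (F l)] [∀ l, Module A (F l)]
    (S : Set Λ) (X : Type) [AddCommGroup X] [Module A X] : Type 1 where
  lam : Λ
  mem : lam ∈ S
  iso : X ≃ₗ[A] F lam

/-- `M` has a finite filtration with factors among the modules `F(λ)`, `λ ∈ S`. -/
def InFiltPlain (F : Λ → Type) [∀ l, AddCommGroup (F l)] [∀ l, Module A (F l)]
    (S : Set Λ) (M : Type) [AddCommGroup M] [Module A M] : Prop :=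
  Module.Finite A M ∧
  ∃ (n : ℕ) (c : Fin (n + 1) → Submodule A M), c 0 = ⊥ ∧ c (Fin.last n) = ⊤ ∧ Monotone c ∧
    ∀ i : Fin n, Nonempty (PlainFactor A Λ F S
      (↥(c i.succ) ⧸ (Submodule.comap (c i.succ).subtype (c i.castSucc))))

/-- `X` is a direct summand of `Y` (as `A`-modules). -/
def IsDirectSummand (X Y : Type) [AddCommGroup X] [Module A X] [AddCommGroup Y]
    [Module A Y] : Prop :=
  ∃ (i : X →ₗ[A] Y) (p : Y →ₗ[A] X), p.comp i = LinearMap.id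

/-- `X` belongs to the additive closure `add T`. -/
def InAdd (T : Type) [AddCommGroup T] [Module A T] (X : Type) [AddCommGroup X]
    [Module A X] : Prop :=
  ∃ n : ℕ, IsDirectSummand A X (Fin n → T)

/-- A split quasi-hereditary structure on the `R`-algebra `A` with standard modules
`Δ(λ)`, `λ ∈ Λ` (following Rouquier's module-theoretic definition). -/
structure SplitQH (Δ : Λ → Type) [∀ l, AddCommGroup (Δ l)] [∀ l, Module R (Δ l)]
    [∀ l, Module A (Δ l)] [∀ l, IsScalarTower R A (Δ l)] : Type 1 where
  algFin : Module.Finite R A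
  algProj : Module.Projective R A
  deltaFinA : ∀ l, Module.Finite A (Δ l)
  deltaFinR : ∀ l, Module.Finite R (Δ l)
  deltaProjR : ∀ l, Module.Projective R (Δ l)
  hom_le : ∀ l m : Λ, (∃ f : Δ l →ₗ[A] Δ m, f ≠ 0) → l ≤ m
  endIso : ∀ l, Nonempty ((Module.End A (Δ l)) ≃ₐ[R] R)
  P : Λ → ModuleCat.{0} A
  P_proj : ∀ l, Module.Projective A (P l)
  P_fin : ∀ l, Module.Finite A (P l)
  epi : ∀ l, (P l : Type) →ₗ[A] Δ l
  epi_surj : ∀ l, Function.Surjective (epi l)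
  ker_filt : ∀ l, InFilt R A Λ Δ {m | l < m} ↥(LinearMap.ker (epi l))
  add_gen : ∀ (Q : ModuleCat.{0} A), Module.Finite A Q → Module.Projective A Q →
    InAdd A (∀ l, (P l : Type)) Q

/-- Vanishing of `Ext^i_A(M, N)` (computed in the abelian category of `A`-modules). -/
def extVanish (M : Type) [AddCommGroup M] [Module A M] (N : Type) [AddCommGroup N]
    [Module A N] (i : ℕ) : Prop :=
  Subsingleton (((Ext ℤ (ModuleCat.{0} A) i).obj
    (Opposite.op (ModuleCat.of A M))).obj (ModuleCat.of A N))

/-- `∇` is a family of costandard modules for the split quasi-hereditary algebra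
`(A, {Δ(λ)})`: the `R`-linear duals `D∇(λ)` make `A^op` split quasi-hereditary (with the same
poset), and the `Ext`-orthogonality relations with the standard modules hold. -/
def IsCostandard (Δ : Λ → Type) [∀ l, AddCommGroup (Δ l)] [∀ l, Module R (Δ l)]
    [∀ l, Module A (Δ l)] [∀ l, IsScalarTower R A (Δ l)]
    (N : Λ → Type) [∀ l, AddCommGroup (N l)] [∀ l, Module R (N l)]
    [∀ l, Module A (N l)] [∀ l, IsScalarTower R A (N l)] : Prop :=
  Nonempty (SplitQH R Aᵐᵒᵖ Λ (fun l => (N l →ₗ[R] R))) ∧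
  (∀ l, Nonempty ((Δ l →ₗ[A] N l) ≃ₗ[R] R)) ∧
  (∀ l m, l ≠ m → ∀ f : Δ l →ₗ[A] N m, f = 0) ∧
  (∀ l m : Λ, ∀ i : ℕ, 0 < i → extVanish A (Δ l) (N m) i)

/-- A bundled family of costandard modules. -/
structure CostandardFamily (Δ : Λ → Type) [∀ l, AddCommGroup (Δ l)] [∀ l, Module R (Δ l)]
    [∀ l, Module A (Δ l)] [∀ l, IsScalarTower R A (Δ l)] : Type 1 where
  Nab : Λ → Type
  [acg : ∀ l, AddCommGroup (Nab l)]
  [modR : ∀ l, Module R (Nab l)]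
  [modA : ∀ l, Module A (Nab l)]
  [tower : ∀ l, IsScalarTower R A (Nab l)]
  cost : IsCostandard R A Λ Δ Nab

attribute [instance] CostandardFamily.acg CostandardFamily.modR CostandardFamily.modA
  CostandardFamily.tower

/-- `T` is a family of (partial) tilting modules forming a characteristic tilting module
`⊕ T(λ)`: each `T(λ)` admits an exact sequence `0 → Δ(λ) → T(λ) → X(λ) → 0` with
`X(λ) ∈ F(Δ̃_{μ<λ})` and an exact sequence `0 → Y(λ) → T(λ) → ∇(λ) → 0` with
`Y(λ) ∈ F(∇̃_{μ<λ})`. -/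
def IsCharTilting (Δ : Λ → Type) [∀ l, AddCommGroup (Δ l)] [∀ l, Module R (Δ l)]
    [∀ l, Module A (Δ l)] [∀ l, IsScalarTower R A (Δ l)]
    (N : Λ → Type) [∀ l, AddCommGroup (N l)] [∀ l, Module R (N l)]
    [∀ l, Module A (N l)] [∀ l, IsScalarTower R A (N l)]
    (T : Λ → Type) [∀ l, AddCommGroup (T l)] [∀ l, Module A (T l)] : Prop :=
  ∀ l : Λ,
    (∃ f : Δ l →ₗ[A] T l, Function.Injective f ∧
      InFilt R A Λ Δ {m | m < l} ((T l) ⧸ LinearMap.range f)) ∧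
    (∃ g : T l →ₗ[A] N l, Function.Surjective g ∧
      InFilt R A Λ N {m | m < l} ↥(LinearMap.ker g))

end Core

end

noncomputable section

section Fiber

variable (R : Type) [CommRing R] (A : Type) [Ring A] [Algebra R A]

/-- The `A`-submodule `I·M` of `M`, for an ideal `I` of `R`. -/
def idealSub (I : Ideal R) (M : Type) [AddCommGroup M] [Module R M] [Module A M] :
    Submodule A M :=
  Submodule.span A {x : M | ∃ r ∈ I, ∃ m : M, x = r • m}

/-- The fibre `M(I) = M / I·M` of `M` at an ideal `I` of `R`, as an `A`-module. -/
abbrev Fiber (I : Ideal R) (M : Type) [AddCommGroup M] [Module R M] [Module A M] : Type :=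
  M ⧸ idealSub R A I M

end Fiber

/-!
Put `D = Δ(λ)` and let `P → D` be the surjection from the projective module `P(λ)`, whose kernel is
filtered by modules `Δ(μ) ⊗ U` with `μ > λ`. One takes `F = Hom_A(D, M)` and shows that evaluation
`D ⊗ Hom_A(D, M) → M` is bijective.

For `μ ≰ λ` the `R`-module `Hom_A(P(μ), M)` has the same fibres as `Hom_A(P(μ), D) = 0`, so it
vanishes by Nakayama's lemma, and with it `Hom_A(Δ(μ), M)`. Hence `Hom_A(D, M) = Hom_A(P, M)`, a
finitely generated projective `R`-module with the same fibres as `Hom_A(P, D) = End_A(D) = R`: it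
has rank one, so it is invertible. Lifting the isomorphisms `D(𝔪) ≅ M(𝔪)` to maps `P → M`, which
factor through `D`, shows by Nakayama's lemma that evaluation is surjective. Source and target are
projective of the same rank over `R`, so it is bijective.
-/

theorem projective_of_exact {R K M Q : Type*} [Ring R] [AddCommGroup K] [Module R K]
    [AddCommGroup M] [Module R M] [AddCommGroup Q] [Module R Q] [Module.Projective R K]
    [Module.Projective R Q] {f : K →ₗ[R] M} {g : M →ₗ[R] Q}
    (hfg : Function.Exact f g) (hf : Function.Injective f) (hg : Function.Surjective g) :
    Module.Projective R M := by
  obtain ⟨σ, hσ⟩ := Module.projective_lifting_property g LinearMap.id hg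
  obtain ⟨e, -⟩ := hfg.splitSurjectiveEquiv hf ⟨σ, hσ⟩
  exact Module.Projective.of_equiv e.symm

section CommutativeAlgebra

variable {R M N : Type*} [CommRing R] [AddCommGroup M] [Module R M] [AddCommGroup N] [Module R N]

theorem subsingleton_of_forall_isMaximal_smul_top_eq_top [Module.Finite R M]
    (h : ∀ 𝔪 : Ideal R, 𝔪.IsMaximal → 𝔪 • (⊤ : Submodule R M) = ⊤) : Subsingleton M := by
  rw [← Module.annihilator_eq_top_iff (R := R)]
  by_contra hne
  obtain ⟨𝔪, hmax, hle⟩ := Ideal.exists_le_maximal _ hne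
  obtain ⟨r, hr, hann⟩ := Submodule.exists_sub_one_mem_and_smul_eq_zero_of_fg_of_le_smul 𝔪 ⊤
    Module.Finite.fg_top (h 𝔪 hmax).ge
  have hr𝔪 : r ∈ 𝔪 := hle (Module.mem_annihilator.2 fun x => hann x trivial)
  refine hmax.ne_top ((Ideal.eq_top_iff_one 𝔪).2 ?_)
  simpa using 𝔪.sub_mem hr𝔪 hr

theorem surjective_of_forall_isMaximal_exists_sub_mem [Module.Finite R N] (f : M →ₗ[R] N)
    (h : ∀ 𝔪 : Ideal R, 𝔪.IsMaximal → ∀ y, ∃ x, y - f x ∈ 𝔪 • (⊤ : Submodule R N)) :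
    Function.Surjective f := by
  rw [← LinearMap.range_eq_top, ← Submodule.Quotient.subsingleton_iff]
  refine subsingleton_of_forall_isMaximal_smul_top_eq_top (R := R) fun 𝔪 hmax => ?_
  refine eq_top_iff.2 fun z _ => ?_
  obtain ⟨y, rfl⟩ := (LinearMap.range f).mkQ_surjective z
  obtain ⟨x, hx⟩ := h 𝔪 hmax y
  have hfx : (LinearMap.range f).mkQ (f x) = 0 := (Submodule.Quotient.mk_eq_zero _).2 ⟨x, rfl⟩
  have hmem := Submodule.smul_top_le_comap_smul_top 𝔪 (LinearMap.range f).mkQ hx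
  rwa [Submodule.mem_comap, map_sub, hfx, sub_zero] at hmem

section Flat

variable [Module.Finite R M] [Module.Flat R M]

theorem rankAtStalk_eq_finrank_quotient (𝔪 : Ideal R) [𝔪.IsMaximal] :
    Module.rankAtStalk M ⟨𝔪, inferInstance⟩ =
      Module.finrank (R ⧸ 𝔪) (M ⧸ 𝔪 • (⊤ : Submodule R M)) := by
  let := Ideal.Quotient.field 𝔪
  let e : (R ⧸ 𝔪) ⊗[R] M ≃ₗ[R ⧸ 𝔪] M ⧸ 𝔪 • (⊤ : Submodule R M) :=
    (TensorProduct.quotTensorEquivQuotSMul M 𝔪).extendScalarsOfSurjective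
      Ideal.Quotient.mk_surjective
  rw [Module.rankAtStalk_eq, ← e.finrank_eq, ← Module.finrank_baseChange
    (R := 𝔪.ResidueField) (S := R ⧸ 𝔪) (M' := (R ⧸ 𝔪) ⊗[R] M)]
  exact (TensorProduct.AlgebraTensorModule.cancelBaseChange R (R ⧸ 𝔪) 𝔪.ResidueField
    𝔪.ResidueField M).finrank_eq.symm

theorem rankAtStalk_eq_of_quotient_equiv [Module.Finite R N] [Module.Flat R N] (𝔪 : Ideal R)
    [𝔪.IsMaximal] (e : (M ⧸ 𝔪 • (⊤ : Submodule R M)) ≃ₗ[R] N ⧸ 𝔪 • (⊤ : Submodule R N)) :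
    Module.rankAtStalk M ⟨𝔪, inferInstance⟩ = Module.rankAtStalk N ⟨𝔪, inferInstance⟩ := by
  rw [rankAtStalk_eq_finrank_quotient, rankAtStalk_eq_finrank_quotient]
  exact (e.extendScalarsOfSurjective Ideal.Quotient.mk_surjective).finrank_eq

end Flat

section Projective

variable [Module.Finite R M] [Module.Projective R M]

attribute [local instance] Module.free_of_flat_of_isLocalRing in
variable (R M N) in
theorem rankAtStalk_linearMap [Module.Finite R N] [Module.Projective R N] :
    Module.rankAtStalk (R := R) (M →ₗ[R] N) = Module.rankAtStalk M * Module.rankAtStalk N := by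
  ext p
  have := Module.finitePresentation_of_projective R M
  let S := p.asIdeal.primeCompl
  let e := (Module.FinitePresentation.linearEquivMapExtendScalars (M := M) (N := N)
    S).extendScalarsOfIsLocalization S (Localization S)
  exact e.finrank_eq.trans (Module.finrank_linearMap _ _ _ _)

theorem mem_ideal_smul_top_of_forall_dual_mem {I : Ideal R} {x : M}
    (h : ∀ ψ : Module.Dual R M, ψ x ∈ I) : x ∈ I • (⊤ : Submodule R M) := by
  obtain ⟨n, s, i, -, -, hsi⟩ := Module.Finite.exists_comp_eq_id_of_projective R M
  have hx : s (i x) = x := LinearMap.congr_fun hsi x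
  rw [← hx, LinearMap.pi_apply_eq_sum_univ s]
  exact sum_mem fun j _ => Submodule.smul_mem_smul (h (LinearMap.proj j ∘ₗ i)) trivial

theorem contractLeft_surjective_of_rankAtStalk_ne_zero
    (h : ∀ (𝔪 : Ideal R) [𝔪.IsMaximal], Module.rankAtStalk M ⟨𝔪, inferInstance⟩ ≠ 0) :
    Function.Surjective (contractLeft R M) := by
  rw [← LinearMap.range_eq_top]
  by_contra hne
  obtain ⟨𝔪, hmax, hle⟩ := Ideal.exists_le_maximal _ hne
  have htop : 𝔪 • (⊤ : Submodule R M) = ⊤ := eq_top_iff.2 fun x _ =>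
    mem_ideal_smul_top_of_forall_dual_mem fun ψ => hle ⟨ψ ⊗ₜ x, contractLeft_apply ψ x⟩
  have := Submodule.Quotient.subsingleton_iff.2 htop
  exact h 𝔪 ((rankAtStalk_eq_finrank_quotient 𝔪).trans Module.finrank_zero_of_subsingleton)

theorem invertible_of_rankAtStalk_eq_one
    (h : ∀ (𝔪 : Ideal R) [𝔪.IsMaximal], Module.rankAtStalk M ⟨𝔪, inferInstance⟩ = 1) :
    Module.Invertible R M where
  bijective := by
    have hsurj : Function.Surjective (contractLeft R M) :=
      contractLeft_surjective_of_rankAtStalk_ne_zero fun 𝔪 _ => (h 𝔪).trans_ne one_ne_zero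
    refine Module.bijective_of_surjective_of_rankAtStalk_eq (M := Module.Dual R M ⊗[R] M) (N := R)
      hsurj fun 𝔪 _ => ?_
    have := (⟨𝔪, inferInstance⟩ : PrimeSpectrum R).nontrivial
    rw [Module.rankAtStalk_tensorProduct, rankAtStalk_linearMap, Module.rankAtStalk_self]
    simp only [Pi.mul_apply, Pi.one_apply, h 𝔪, mul_one]

end Projective

end CommutativeAlgebra

section Hom

variable {R A P M : Type*} [CommRing R] [Ring A] [Algebra R A] [AddCommGroup P] [Module A P]
  [AddCommGroup M] [Module R M] [Module A M] [IsScalarTower R A M]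

section

variable {D : Type*} [AddCommGroup D] [Module A D]

variable (R P) in
/-- The isomorphism `Hom_A(P, M) ≃ Hom_A(P, D)` of `R`-modules induced by an isomorphism `M ≃ D`
of `A`-modules. -/
def homCongrRight [Module R D] [IsScalarTower R A D] (e : M ≃ₗ[A] D) :
    (P →ₗ[A] M) ≃ₗ[R] (P →ₗ[A] D) :=
  .ofLinearMap (LinearMap.compRight R e.toLinearMap) (LinearMap.compRight R e.symm.toLinearMap)
    (by ext; simp) (by ext; simp)

theorem lcomp_bijective_of_subsingleton_ker {p : P →ₗ[A] D} (hp : Function.Surjective p)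
    [Subsingleton (LinearMap.ker p →ₗ[A] M)] : Function.Bijective (LinearMap.lcomp R M p) := by
  refine ⟨LinearMap.lcomp_injective_of_surjective p hp, fun f => ?_⟩
  have hker : LinearMap.ker p ≤ LinearMap.ker f := fun x hx =>
    LinearMap.congr_fun (Subsingleton.elim (f ∘ₗ (LinearMap.ker p).subtype) 0) ⟨x, hx⟩
  refine ⟨(LinearMap.ker p).liftQ f hker ∘ₗ (p.quotKerEquivOfSurjective hp).symm, ?_⟩
  ext x
  have hx : (p.quotKerEquivOfSurjective hp).symm (p x) = Submodule.Quotient.mk x :=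
    (LinearEquiv.symm_apply_eq _).2 rfl
  simp [hx]

end

variable [Module.Finite A P] [Module.Projective A P]

variable (R A P M) in
theorem exists_eval_leftInverse : ∃ (n : ℕ) (p : Fin n → P)
    (r : (Fin n → M) →ₗ[R] P →ₗ[A] M), ∀ f : P →ₗ[A] M, r (fun j => f (p j)) = f := by
  obtain ⟨n, s, i, -, -, hsi⟩ := Module.Finite.exists_comp_eq_id_of_projective A P
  let b := Pi.basisFun A (Fin n)
  refine ⟨n, fun j => s (b j), LinearMap.lcomp R M i ∘ₗ (b.constr R).toLinearMap, fun f => ?_⟩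
  have hb : b.constr R (fun j => f (s (b j))) = f ∘ₗ s := b.ext fun j => by simp
  rw [LinearMap.comp_apply, LinearEquiv.coe_coe, hb, LinearMap.lcomp_apply', LinearMap.comp_assoc,
    hsi, LinearMap.comp_id]

theorem finite_hom_of_projective [Module.Finite R M] : Module.Finite R (P →ₗ[A] M) := by
  obtain ⟨n, p, r, hr⟩ := exists_eval_leftInverse R A P M
  exact Module.Finite.of_surjective r fun f => ⟨_, hr f⟩

theorem projective_hom_of_projective [Module.Projective R M] :
    Module.Projective R (P →ₗ[A] M) := by
  obtain ⟨n, p, r, hr⟩ := exists_eval_leftInverse R A P M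
  have : Module.Projective R (Fin n → M) := .of_equiv' DFinsupp.linearEquivFunOnFintype
  exact .of_split (LinearMap.pi fun j => LinearMap.applyₗ' R (p j)) r (LinearMap.ext hr)

theorem mem_smul_top_of_forall_apply_mem {I : Ideal R} {f : P →ₗ[A] M}
    (h : ∀ x, f x ∈ I • (⊤ : Submodule R M)) : f ∈ I • (⊤ : Submodule R (P →ₗ[A] M)) := by
  obtain ⟨n, p, r, hr⟩ := exists_eval_leftInverse R A P M
  rw [← hr f, ← Finset.univ_sum_single fun j => f (p j), map_sum]
  exact sum_mem fun j _ =>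
    Submodule.smul_top_le_comap_smul_top I (r ∘ₗ LinearMap.single R (fun _ => M) j) (h (p j))

end Hom

section Fibers

variable {R A M D : Type} {P : Type*} [CommRing R] [Ring A] [Algebra R A]
  [AddCommGroup P] [Module A P]
  [AddCommGroup M] [Module R M] [Module A M] [IsScalarTower R A M]
  [AddCommGroup D] [Module R D] [Module A D] [IsScalarTower R A D]

theorem restrictScalars_idealSub (I : Ideal R) :
    (idealSub R A I M).restrictScalars R = I • (⊤ : Submodule R M) := by
  ext x
  rw [Submodule.restrictScalars_mem]
  refine ⟨fun hx => ?_, fun hx => ?_⟩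
  · induction hx using Submodule.span_induction with
    | mem x hx =>
      obtain ⟨r, hr, m, rfl⟩ := hx
      exact Submodule.smul_mem_smul hr trivial
    | zero => exact zero_mem _
    | add x y _ _ hx hy => exact add_mem hx hy
    | smul a x _ hx => exact Submodule.smul_top_le_comap_smul_top I (actL R A M a) hx
  · induction hx using Submodule.smul_induction_on' with
    | smul r hr m _ => exact Submodule.subset_span ⟨r, hr, m, rfl⟩
    | add x _ y _ hx hy => exact add_mem hx hy

theorem mem_idealSub_iff {I : Ideal R} {x : M} :
    x ∈ idealSub R A I M ↔ x ∈ I • (⊤ : Submodule R M) := by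
  rw [← restrictScalars_idealSub (A := A), Submodule.restrictScalars_mem]

variable (A M) in
/-- The underlying `R`-module of the fibre `M(I)` is `M / IM`. -/
def quotEquivFiber (I : Ideal R) : (M ⧸ I • (⊤ : Submodule R M)) ≃ₗ[R] Fiber R A I M :=
  Submodule.quotEquivOfEq _ _ (restrictScalars_idealSub I).symm ≪≫ₗ
    Submodule.Quotient.restrictScalarsEquiv R (idealSub R A I M)

variable [Module.Finite A P] [Module.Projective A P]

theorem ker_compRight_mkQ_idealSub (I : Ideal R) :
    LinearMap.ker (LinearMap.compRight R (idealSub R A I M).mkQ : (P →ₗ[A] M) →ₗ[R] _) =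
      I • (⊤ : Submodule R (P →ₗ[A] M)) := by
  refine le_antisymm (fun f hf => mem_smul_top_of_forall_apply_mem fun x => ?_) ?_
  · rw [← mem_idealSub_iff (A := A), ← Submodule.Quotient.mk_eq_zero]
    exact LinearMap.congr_fun hf x
  · refine Submodule.smul_le.2 fun r hr f _ => LinearMap.ext fun x => ?_
    exact (Submodule.Quotient.mk_eq_zero _).2 (Submodule.subset_span ⟨r, hr, f x, rfl⟩)

variable (P M) in
/-- For `P` finitely generated projective, `Hom_A(P, -)` commutes with passing to the fibre
at `I`. -/
def homQuotEquiv (I : Ideal R) :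
    ((P →ₗ[A] M) ⧸ I • (⊤ : Submodule R (P →ₗ[A] M))) ≃ₗ[R] (P →ₗ[A] Fiber R A I M) :=
  Submodule.quotEquivOfEq _ _ (ker_compRight_mkQ_idealSub I).symm ≪≫ₗ
    LinearMap.quotKerEquivOfSurjective (LinearMap.compRight R (idealSub R A I M).mkQ)
      fun f => Module.projective_lifting_property _ f (Submodule.mkQ_surjective _)

variable (P) in
/-- For `P` finitely generated projective, an isomorphism of the fibres of `M` and `D` induces an
isomorphism of the fibres of `Hom_A(P, M)` and `Hom_A(P, D)`. -/
def homQuotCongr {I : Ideal R} (e : Fiber R A I M ≃ₗ[A] Fiber R A I D) :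
    ((P →ₗ[A] M) ⧸ I • (⊤ : Submodule R (P →ₗ[A] M))) ≃ₗ[R]
      (P →ₗ[A] D) ⧸ I • (⊤ : Submodule R (P →ₗ[A] D)) :=
  homQuotEquiv M P I ≪≫ₗ homCongrRight R P e ≪≫ₗ (homQuotEquiv D P I).symm

theorem subsingleton_hom_of_projective_of_fiber_equiv [Module.Finite R M] [Subsingleton (P →ₗ[A] D)]
    (h : ∀ 𝔪 : Ideal R, 𝔪.IsMaximal → Nonempty (Fiber R A 𝔪 M ≃ₗ[A] Fiber R A 𝔪 D)) :
    Subsingleton (P →ₗ[A] M) := by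
  have := finite_hom_of_projective (R := R) (A := A) (P := P) (M := M)
  refine subsingleton_of_forall_isMaximal_smul_top_eq_top (R := R) fun 𝔪 hmax => ?_
  obtain ⟨e⟩ := h 𝔪 hmax
  exact Submodule.Quotient.subsingleton_iff.1 (homQuotCongr P e).subsingleton

end Fibers

section Evaluation

variable {R A D M : Type} [CommRing R] [Ring A] [Algebra R A]
  [AddCommGroup D] [Module R D] [Module A D] [IsScalarTower R A D]
  [AddCommGroup M] [Module R M] [Module A M] [IsScalarTower R A M]

variable (R A D M) in
/-- The evaluation map `D ⊗_R Hom_A(D, M) → M`. -/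
def evalTensor : D ⊗[R] (D →ₗ[A] M) →ₗ[A] M :=
  TensorProduct.AlgebraTensorModule.lift
    { toFun := LinearMap.applyₗ' R
      map_add' := map_add _
      map_smul' := fun a x => by ext f; simp }

theorem rankAtStalk_eq_of_fiber_equiv [Module.Finite R M] [Module.Flat R M] [Module.Finite R D]
    [Module.Flat R D] {𝔪 : Ideal R} [𝔪.IsMaximal] (e : Fiber R A 𝔪 M ≃ₗ[A] Fiber R A 𝔪 D) :
    Module.rankAtStalk M ⟨𝔪, inferInstance⟩ = Module.rankAtStalk D ⟨𝔪, inferInstance⟩ :=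
  rankAtStalk_eq_of_quotient_equiv 𝔪 <|
    quotEquivFiber A M 𝔪 ≪≫ₗ e.restrictScalars R ≪≫ₗ (quotEquivFiber A D 𝔪).symm

variable {P : Type*} [AddCommGroup P] [Module A P] [Module.Projective A P]

theorem evalTensor_surjective [Module.Finite R M] {p : P →ₗ[A] D} (hp : Function.Surjective p)
    (hM : Function.Surjective (LinearMap.lcomp R M p))
    (h : ∀ 𝔪 : Ideal R, 𝔪.IsMaximal → Nonempty (Fiber R A 𝔪 M ≃ₗ[A] Fiber R A 𝔪 D)) :
    Function.Surjective (evalTensor R A D M) := by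
  refine surjective_of_forall_isMaximal_exists_sub_mem ((evalTensor R A D M).restrictScalars R)
    fun 𝔪 hmax y => ?_
  obtain ⟨e⟩ := h 𝔪 hmax
  obtain ⟨f, hf⟩ := Module.projective_lifting_property (idealSub R A 𝔪 M).mkQ
    (e.symm.toLinearMap ∘ₗ (idealSub R A 𝔪 D).mkQ ∘ₗ p) (Submodule.mkQ_surjective _)
  obtain ⟨u, rfl⟩ := hM f
  obtain ⟨d, hd⟩ := (idealSub R A 𝔪 D).mkQ_surjective (e ((idealSub R A 𝔪 M).mkQ y))
  obtain ⟨x, rfl⟩ := hp d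
  have hy : (idealSub R A 𝔪 M).mkQ (u (p x)) = (idealSub R A 𝔪 M).mkQ y := by
    rw [← e.symm_apply_apply ((idealSub R A 𝔪 M).mkQ y), ← hd]
    exact LinearMap.congr_fun hf x
  refine ⟨p x ⊗ₜ u, ?_⟩
  rw [← mem_idealSub_iff (A := A)]
  exact (Submodule.Quotient.eq _).1 hy.symm

variable [Module.Finite A P] [Module.Finite R M] [Module.Projective R M]
  [Module.Finite R D] [Module.Projective R D] {p : P →ₗ[A] D}

attribute [local instance] finite_hom_of_projective projective_hom_of_projective

theorem rankAtStalk_hom_eq_one (hD : Function.Bijective (LinearMap.lcomp R D p))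
    (hM : Function.Bijective (LinearMap.lcomp R M p)) (hEnd : Nonempty (Module.End A D ≃ₗ[R] R))
    {𝔪 : Ideal R} [𝔪.IsMaximal] (e : Fiber R A 𝔪 M ≃ₗ[A] Fiber R A 𝔪 D) :
    Module.rankAtStalk (D →ₗ[A] M) ⟨𝔪, inferInstance⟩ = 1 := by
  have := (⟨𝔪, inferInstance⟩ : PrimeSpectrum R).nontrivial
  obtain ⟨φ⟩ := hEnd
  rw [Module.rankAtStalk_eq_of_equiv (LinearEquiv.ofBijective _ hM),
    rankAtStalk_eq_of_quotient_equiv 𝔪 (homQuotCongr P e),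
    ← Module.rankAtStalk_eq_of_equiv (LinearEquiv.ofBijective _ hD),
    Module.rankAtStalk_eq_of_equiv φ, Module.rankAtStalk_self, Pi.one_apply]

theorem invertible_hom (hD : Function.Bijective (LinearMap.lcomp R D p))
    (hM : Function.Bijective (LinearMap.lcomp R M p)) (hEnd : Nonempty (Module.End A D ≃ₗ[R] R))
    (h : ∀ 𝔪 : Ideal R, 𝔪.IsMaximal → Nonempty (Fiber R A 𝔪 M ≃ₗ[A] Fiber R A 𝔪 D)) :
    Module.Invertible R (D →ₗ[A] M) := by
  let ε : (D →ₗ[A] M) ≃ₗ[R] (P →ₗ[A] M) := .ofBijective _ hM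
  have := Module.Finite.equiv ε.symm
  have := Module.Projective.of_equiv ε.symm
  refine invertible_of_rankAtStalk_eq_one fun 𝔪 hmax => ?_
  obtain ⟨e⟩ := h 𝔪 hmax
  exact rankAtStalk_hom_eq_one hD hM hEnd e

theorem evalTensor_bijective (hp : Function.Surjective p)
    (hD : Function.Bijective (LinearMap.lcomp R D p))
    (hM : Function.Bijective (LinearMap.lcomp R M p)) (hEnd : Nonempty (Module.End A D ≃ₗ[R] R))
    (h : ∀ 𝔪 : Ideal R, 𝔪.IsMaximal → Nonempty (Fiber R A 𝔪 M ≃ₗ[A] Fiber R A 𝔪 D)) :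
    Function.Bijective (evalTensor R A D M) := by
  have := invertible_hom hD hM hEnd h
  refine Module.bijective_of_surjective_of_rankAtStalk_eq (R := R)
    (φ := (evalTensor R A D M).restrictScalars R) (evalTensor_surjective hp hM.surjective h)
    fun 𝔪 hmax => ?_
  obtain ⟨e⟩ := h 𝔪 hmax
  rw [Module.rankAtStalk_tensorProduct, Pi.mul_apply, rankAtStalk_hom_eq_one hD hM hEnd e, mul_one,
    rankAtStalk_eq_of_fiber_equiv e]

end Evaluation

section Filtration

variable {R A : Type} [CommRing R] [Ring A] [Algebra R A]
  {Λ : Type} {Δ : Λ → Type} [∀ l, AddCommGroup (Δ l)] [∀ l, Module R (Δ l)]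
  [∀ l, Module A (Δ l)] [∀ l, IsScalarTower R A (Δ l)] {S : Set Λ}
  {M N : Type} [AddCommGroup M] [Module A M] [AddCommGroup N] [Module A N]

theorem subsingleton_tensorProduct_hom {D U : Type*} [AddCommGroup D] [Module R D] [Module A D]
    [IsScalarTower R A D] [AddCommGroup U] [Module R U] [Subsingleton (D →ₗ[A] N)] :
    Subsingleton (D ⊗[R] U →ₗ[A] N) := by
  refine subsingleton_of_forall_eq 0 fun f => LinearMap.ext fun z => ?_
  induction z with
  | zero => exact map_zero f
  | add x y hx hy => rw [map_add, hx, hy, map_add]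
  | tmul d u =>
    let g : D →ₗ[A] N :=
      { toFun := fun d => f (d ⊗ₜ[R] u)
        map_add' := fun d d' => by rw [TensorProduct.add_tmul, map_add]
        map_smul' := fun a d => by rw [← TensorProduct.smul_tmul', map_smul, RingHom.id_apply] }
    exact LinearMap.congr_fun (Subsingleton.elim g 0) d

theorem InFilt.subsingleton_hom (hM : InFilt R A Λ Δ S M)
    (hN : ∀ ν ∈ S, Subsingleton (Δ ν →ₗ[A] N)) : Subsingleton (M →ₗ[A] N) := by
  obtain ⟨-, n, c, h0, hn, -, hc⟩ := hM
  refine subsingleton_of_forall_eq 0 fun f => ?_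
  rw [← LinearMap.ker_eq_top, eq_top_iff, ← hn]
  suffices ∀ i, c i ≤ LinearMap.ker f from this _
  intro i
  induction i using Fin.induction with
  | zero => exact h0.trans_le bot_le
  | succ i ih =>
    obtain ⟨t⟩ := hc i
    have := hN _ t.mem
    have := subsingleton_tensorProduct_hom (R := R) (A := A) (D := Δ t.lam) (U := t.U) (N := N)
    let g := Submodule.liftQ ((c i.castSucc).comap (c i.succ).subtype) (f ∘ₗ (c i.succ).subtype)
      fun x hx => ih hx
    have hg : g ∘ₗ t.iso.symm.toLinearMap = 0 := Subsingleton.elim _ _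
    intro x hx
    have hgx := LinearMap.congr_fun hg (t.iso (Submodule.Quotient.mk ⟨x, hx⟩))
    rwa [LinearMap.comp_apply, LinearEquiv.coe_coe, LinearEquiv.symm_apply_apply] at hgx

theorem InFilt.projective [Module R M] [IsScalarTower R A M] (hM : InFilt R A Λ Δ S M)
    (hΔ : ∀ l ∈ S, Module.Projective R (Δ l)) : Module.Projective R M := by
  obtain ⟨-, n, c, h0, hn, hmono, hc⟩ := hM
  have hproj : ∀ i, Module.Projective R (c i) := by
    intro i
    induction i using Fin.induction with
    | zero =>
      rw [h0]
      infer_instance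
    | succ i ih =>
      obtain ⟨t⟩ := hc i
      have := hΔ _ t.mem
      have := t.proj
      let ι : c i.castSucc →ₗ[A] c i.succ := Submodule.inclusion (hmono i.castSucc_le_succ)
      let π : c i.succ →ₗ[A] Δ t.lam ⊗[R] t.U := t.iso.toLinearMap ∘ₗ Submodule.mkQ _
      have hexact : Function.Exact ι π := LinearMap.exact_iff.2 <| by
        rw [LinearEquiv.ker_comp, Submodule.ker_mkQ, Submodule.range_inclusion]
      exact projective_of_exact (f := ι.restrictScalars R) (g := π.restrictScalars R) hexact
        (Submodule.inclusion_injective (hmono i.castSucc_le_succ))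
        (t.iso.surjective.comp (Submodule.mkQ_surjective _))
  have := hproj (Fin.last n)
  rw [hn] at this
  exact .of_equiv ((Submodule.topEquiv : _ ≃ₗ[A] M).restrictScalars R)

end Filtration

section QuasiHereditary

variable {R A : Type} [CommRing R] [Ring A] [Algebra R A]
  {Λ : Type} [PartialOrder Λ] {Δ : Λ → Type} [∀ l, AddCommGroup (Δ l)] [∀ l, Module R (Δ l)]
  [∀ l, Module A (Δ l)] [∀ l, IsScalarTower R A (Δ l)]
  {M : Type} [AddCommGroup M] [Module R M] [Module A M] [IsScalarTower R A M] {l μ ν : Λ}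

theorem SplitQH.subsingleton_hom (h : SplitQH R A Λ Δ) (hμν : ¬ μ ≤ ν) :
    Subsingleton (Δ μ →ₗ[A] Δ ν) :=
  subsingleton_of_forall_eq 0 fun f => by_contra fun hf => hμν (h.hom_le μ ν ⟨f, hf⟩)

theorem SplitQH.lcomp_epi_bijective (h : SplitQH R A Λ Δ)
    (hM : ∀ ν, μ < ν → Subsingleton (Δ ν →ₗ[A] M)) :
    Function.Bijective (LinearMap.lcomp R M (h.epi μ)) :=
  have := (h.ker_filt μ).subsingleton_hom hM
  lcomp_bijective_of_subsingleton_ker (h.epi_surj μ)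

theorem SplitQH.subsingleton_projective_hom (h : SplitQH R A Λ Δ) (hμν : ¬ μ ≤ ν) :
    Subsingleton (h.P μ →ₗ[A] Δ ν) :=
  have := h.subsingleton_hom hμν
  have hbij : Function.Bijective (LinearMap.lcomp R (Δ ν) (h.epi μ)) :=
    h.lcomp_epi_bijective fun _ hκ => h.subsingleton_hom fun hle => hμν (hκ.le.trans hle)
  hbij.surjective.subsingleton

theorem SplitQH.subsingleton_hom_of_fiber_equiv (h : SplitQH R A Λ Δ) [Module.Finite R M]
    (hfib : ∀ 𝔪 : Ideal R, 𝔪.IsMaximal → Nonempty (Fiber R A 𝔪 M ≃ₗ[A] Fiber R A 𝔪 (Δ l)))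
    (hμ : ¬ μ ≤ l) : Subsingleton (Δ μ →ₗ[A] M) :=
  have := h.P_fin μ
  have := h.P_proj μ
  have := h.subsingleton_projective_hom hμ
  have : Subsingleton (h.P μ →ₗ[A] M) :=
    subsingleton_hom_of_projective_of_fiber_equiv hfib
  have hinj : Function.Injective (LinearMap.lcomp R M (h.epi μ)) :=
    LinearMap.lcomp_injective_of_surjective _ (h.epi_surj μ)
  hinj.subsingleton

theorem standard_up_to_invertible_of_fibers_general (h : SplitQH R A Λ Δ) [Module.Finite R M]
    [Module.Projective R M] (l : Λ)
    (hfib : ∀ 𝔪 : Ideal R, 𝔪.IsMaximal → Nonempty (Fiber R A 𝔪 M ≃ₗ[A] Fiber R A 𝔪 (Δ l))) :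
    ∃ F : ModuleCat.{0} R,
      (∃ G : ModuleCat.{0} R, Nonempty ((F ⊗[R] G) ≃ₗ[R] R)) ∧
      Nonempty (M ≃ₗ[A] (TensorProduct R (Δ l) F)) := by
  have := h.P_fin l
  have := h.P_proj l
  have := h.deltaFinR l
  have := h.deltaProjR l
  have hΔ : Function.Bijective (LinearMap.lcomp R (Δ l) (h.epi l)) :=
    h.lcomp_epi_bijective fun _ hν => h.subsingleton_hom hν.not_ge
  have hM : Function.Bijective (LinearMap.lcomp R M (h.epi l)) :=
    h.lcomp_epi_bijective fun _ hν => h.subsingleton_hom_of_fiber_equiv hfib hν.not_ge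
  have hEnd : Nonempty (Module.End A (Δ l) ≃ₗ[R] R) := (h.endIso l).map (·.toLinearEquiv)
  have := invertible_hom hΔ hM hEnd hfib
  refine ⟨.of R (Δ l →ₗ[A] M), ⟨.of R (Module.Dual R (Δ l →ₗ[A] M)), ⟨?_⟩⟩, ⟨?_⟩⟩
  · exact TensorProduct.comm R _ _ ≪≫ₗ Module.Invertible.linearEquiv R (Δ l →ₗ[A] M)
  · exact (LinearEquiv.ofBijective (evalTensor R A (Δ l) M)
      (evalTensor_bijective (h.epi_surj l) hΔ hM hEnd hfib)).symm

end QuasiHereditary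

/-- Let `M ∈ F(Δ̃)`. If `M(𝔪) ≅ Δ(λ)(𝔪)` for a fixed `λ` and every
maximal ideal `𝔪` of `R`, then `M ≅ Δ(λ) ⊗_R F` for some invertible `R`-module `F`. -/
theorem standard_up_to_invertible_of_fibers
    (R : Type) [CommRing R] [IsNoetherianRing R]
    (A : Type) [Ring A] [Algebra R A]
    (Λ : Type) [Fintype Λ] [PartialOrder Λ]
    (Δ : Λ → Type) [∀ l, AddCommGroup (Δ l)] [∀ l, Module R (Δ l)]
    [∀ l, Module A (Δ l)] [∀ l, IsScalarTower R A (Δ l)]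
    (h : SplitQH R A Λ Δ)
    (M : Type) [AddCommGroup M] [Module R M] [Module A M] [IsScalarTower R A M]
    (hM : InFilt R A Λ Δ Set.univ M) (l : Λ)
    (hfib : ∀ 𝔪 : Ideal R, 𝔪.IsMaximal →
      Nonempty ((Fiber R A 𝔪 M) ≃ₗ[A] (Fiber R A 𝔪 (Δ l)))) :
    ∃ F : ModuleCat.{0} R,
      (∃ G : ModuleCat.{0} R, Nonempty ((F ⊗[R] G) ≃ₗ[R] R)) ∧
      Nonempty (M ≃ₗ[A] (TensorProduct R (Δ l) F)) := by
  have := h.algFin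
  have := hM.1
  have := Module.Finite.trans (R := R) A M
  have := hM.projective fun l _ => h.deltaProjR l
  exact standard_up_to_invertible_of_fibers_general h l hfib

end
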